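/- arXiv:2407.10708 — 2 statements merged into one kernel-verified Lean document; each statement's English description precedes it below -/
import Mathlib

section
/- Fix integers q ≥ 1 and γ with 0 ≤ γ ≤ q-1, a real u > 0, and for each integer d ≥ 2 a real K(d) < 0. If lim_{d→∞} (-K(d))·d = 0, then lim_{d→∞} P(d,q,γ,K(d),u) = 1 (subcritical phase of the phase transition). -/
open Real MeasureTheory Filter Asymptotics

/-- Surface area `ω_n = 2 π^{n/2} / Γ(n/2)` of the Euclidean unit sphere in `ℝ^n`. -/
noncomputable def omegaS (n : ℕ) : ℝ := 2 * Real.pi ^ ((n : ℝ) / 2) / Real.Gamma ((n : ℝ) / 2)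

/-- The constant `D(d,q,γ)`. -/
noncomputable def Dconst (d q γ : ℕ) : ℝ :=
  omegaS (γ + 1) * omegaS (q - γ) * omegaS (d - q) / (omegaS (d - q + γ + 1) * omegaS (d - γ))

/-- `R_K(x)`, the Euclidean (Beltrami–Klein) radius of a hyperbolic ball of radius `x`. -/
noncomputable def RK (K x : ℝ) : ℝ :=
  Real.sinh (Real.sqrt (-K) * x) /
    (Real.sqrt (-K) * Real.sqrt (1 + Real.sinh (Real.sqrt (-K) * x) ^ 2))

/-- `C_K(d,m,u)`, the invariant measure of the `m`-flats meeting the ball of radius `u`. -/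
noncomputable def Cconst (K : ℝ) (d m : ℕ) (u : ℝ) : ℝ :=
  omegaS (d - m) * Real.sqrt (-K) ^ (-(d : ℝ) + (m : ℝ) + 1) *
    ∫ r in (0:ℝ)..u,
      Real.cosh (Real.sqrt (-K) * r) ^ m * Real.sinh (Real.sqrt (-K) * r) ^ (d - m - 1)

/-- `P(d,q,γ,K,u)`, the hyperbolic intersection probability of the random flats `E` and `L`. -/
noncomputable def Pprob (d q γ : ℕ) (K u : ℝ) : ℝ :=
  Dconst d q γ * omegaS (d - γ) / Cconst K d (d - q + γ) u *
    ∫ r in (0:ℝ)..(1 / Real.sqrt (-K)),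
      r ^ ((q : ℝ) - (γ : ℝ) - 1) *
        ∫ z in (0:ℝ)..(min 1 (RK K u / r)),
          z ^ q * (1 - z ^ 2) ^ (((d : ℝ) - (q : ℝ)) / 2 - 1) *
            (1 + K * r ^ 2 * z ^ 2) ^ (-((d : ℝ) + 1) / 2)

/-- `F_{K,u}(δ)`, the distribution function of the distance of `E ∩ L` to the origin. -/
noncomputable def Fdist (d q γ : ℕ) (K u δ : ℝ) : ℝ :=
  Dconst d q γ * omegaS (d - γ) / Cconst K d (d - q + γ) u *
    ∫ r in (0:ℝ)..(RK K δ),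
      r ^ ((q : ℝ) - (γ : ℝ) - 1) *
        ∫ z in (0:ℝ)..(min 1 (RK K u / r)),
          z ^ q * (1 - z ^ 2) ^ (((d : ℝ) - (q : ℝ)) / 2 - 1) *
            (1 + K * r ^ 2 * z ^ 2) ^ (-((d : ℝ) + 1) / 2)

/-- `f_{d,q,γ,K}(δ)`, the density of the distance of `E ∩ L` to the origin. -/
noncomputable def fdens (d q γ : ℕ) (K u δ : ℝ) : ℝ :=
  Dconst d q γ * omegaS (d - γ) / Cconst K d (d - q + γ) u *
    (RK K δ ^ ((q : ℝ) - (γ : ℝ) - 1) / Real.cosh (Real.sqrt (-K) * δ) ^ 2) *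
    ∫ z in (0:ℝ)..(min 1 (RK K u / RK K δ)),
      z ^ q * (1 - z ^ 2) ^ (((d : ℝ) - (q : ℝ)) / 2 - 1) *
        (1 + K * RK K δ ^ 2 * z ^ 2) ^ (-((d : ℝ) + 1) / 2)

/-- The limiting constant `ρ(u,q,γ,κ)` in the critical phase. -/
noncomputable def rhoConst (u : ℝ) (q γ : ℕ) (κ : ℝ) : ℝ :=
  omegaS (γ + 1) * (2 * Real.pi) ^ (-((γ : ℝ) + 1) / 2) * u ^ (q + 1) *
    κ ^ (((γ : ℝ) + 1) / 2) *
    (∫ s in (0:ℝ)..u, Real.exp (κ * s ^ 2 / 2) * s ^ ((q : ℝ) - (γ : ℝ) - 1))⁻¹ *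
    ∫ r in (0:ℝ)..1,
      r ^ ((q : ℝ) - (γ : ℝ) - 1) *
        ∫ v in (0:ℝ)..(1 / r),
          v ^ q * Real.exp (-(1 / 2) * u ^ 2 * κ * v ^ 2 * (1 - r ^ 2))


lemma aux_sinh_le (x : ℝ) (hx : 0 ≤ x) : Real.sinh x ≤ x * Real.cosh x := by
  have hm : MonotoneOn (fun y : ℝ => y * Real.cosh y - Real.sinh y) (Set.Ici 0) := by
    apply monotoneOn_of_hasDerivWithinAt_nonneg (f' := fun y => y * Real.sinh y) (convex_Ici 0)
    · fun_prop
    · intro y hy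
      have := ((hasDerivAt_id y).mul (Real.hasDerivAt_cosh y)).sub (Real.hasDerivAt_sinh y)
      refine (this.congr_deriv ?_).hasDerivWithinAt
      simp
    · intro y hy
      simp only [interior_Ici, Set.mem_Ioi] at hy
      exact mul_nonneg hy.le (Real.sinh_nonneg_iff.2 hy.le)
  have := hm (Set.mem_Ici.2 le_rfl) (Set.mem_Ici.2 hx) hx
  simp at this
  linarith

lemma aux_beta (α b : ℝ) (hα : 0 < α) (hb : 0 < b) :
    ∫ x in (0:ℝ)..1, x ^ (α - 1) * (1 - x) ^ (b - 1) = ProbabilityTheory.beta α b := by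
  have h1 : ((∫ x in (0:ℝ)..1, x ^ (α - 1) * (1 - x) ^ (b - 1) : ℝ) : ℂ)
      = Complex.betaIntegral α b := by
    rw [Complex.betaIntegral, ← intervalIntegral.integral_ofReal]
    apply intervalIntegral.integral_congr
    intro x hx
    rw [Set.uIcc_of_le zero_le_one] at hx
    simp only
    rw [Complex.ofReal_mul, Complex.ofReal_cpow hx.1, Complex.ofReal_cpow (by linarith [hx.2])]
    push_cast
    rfl
  rw [ProbabilityTheory.beta_eq_betaIntegralReal α b hα hb, ← h1, Complex.ofReal_re]

lemma aux_beta_sq (γ : ℕ) (b : ℝ) (hb : 0 < b) :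
    ∫ z in (0:ℝ)..1, z ^ γ * (1 - z ^ 2) ^ (b - 1)
      = ProbabilityTheory.beta (((γ:ℝ) + 1) / 2) b / 2 := by
  rw [← aux_beta _ b (by positivity) hb]
  have := integral_comp_rpow_Ioi_of_pos (E := ℝ) (p := 2)
    (g := (Set.Iic (1:ℝ)).indicator
      (fun x : ℝ => x ^ (((γ:ℝ) + 1) / 2 - 1) * (1 - x) ^ (b - 1))) (by norm_num)
  rw [setIntegral_indicator measurableSet_Iic, Set.Ioi_inter_Iic,
    ← intervalIntegral.integral_of_le zero_le_one] at this
  rw [← this, intervalIntegral.integral_of_le zero_le_one, ← Set.Ioi_inter_Iic,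
    ← setIntegral_indicator measurableSet_Iic, div_eq_mul_inv, ← integral_mul_const]
  apply setIntegral_congr_fun measurableSet_Ioi
  intro z hz
  have hz : 0 < z := hz
  have h1 : (z ^ (2:ℝ) ≤ 1) ↔ z ≤ 1 := by
    rw [Real.rpow_two, sq_le_one_iff₀ hz.le]
  simp only [Set.indicator, Set.mem_Iic, h1]
  split_ifs with h
  · have : z * (z ^ (2:ℝ)) ^ (((γ:ℝ) + 1) / 2 - 1) = z ^ γ := by
      rw [← Real.rpow_mul hz.le, ← Real.rpow_natCast z γ]
      nth_rw 1 [← Real.rpow_one z]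
      rw [← Real.rpow_add hz]
      congr 1; ring
    rw [← this, smul_eq_mul, Real.rpow_two, show (2:ℝ) - 1 = 1 by norm_num, Real.rpow_one]
    ring
  · simp

lemma aux_cut (A R z : ℝ) (f : ℝ → ℝ) (hA : 0 < A) (hR : 0 < R) (hz : 0 < z) :
    ∫ r in Set.Ioc 0 A, (if r * z ≤ R then f r else 0) = ∫ r in (0:ℝ)..min A (R / z), f r := by
  rw [intervalIntegral.integral_of_le (by positivity), ← Set.Ioc_inter_Iic,
    ← setIntegral_indicator measurableSet_Iic]
  apply setIntegral_congr_fun measurableSet_Ioc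
  intro r hr
  simp only [Set.indicator, Set.mem_Iic, le_div_iff₀ hz]

/-- The integrand. -/
noncomputable def auxG (γ n : ℕ) (s R a e : ℝ) (r z : ℝ) : ℝ :=
  if r * z ≤ R then r ^ (n - 1) * (z ^ (n + γ) * (1 - z ^ 2) ^ a * (1 - s ^ 2 * r ^ 2 * z ^ 2) ^ (-e))
  else 0

lemma auxG_w (s R e x : ℝ) (hs : 0 < s) (hsR : s * R < 1) (he : 0 ≤ e)
    (hx : 0 ≤ x) (hxR : x ≤ R) :
    1 ≤ (1 - s ^ 2 * x ^ 2) ^ (-e) ∧ (1 - s ^ 2 * x ^ 2) ^ (-e) ≤ (1 - s ^ 2 * R ^ 2) ^ (-e) := by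
  have h0 : s * x ≤ s * R := by gcongr
  have h1 : 0 ≤ s * x := by positivity
  have h2 : 0 < 1 - s ^ 2 * R ^ 2 := by nlinarith
  have h3 : 1 - s ^ 2 * R ^ 2 ≤ 1 - s ^ 2 * x ^ 2 := by nlinarith
  constructor
  · apply Real.one_le_rpow_of_pos_of_le_one_of_nonpos
    · linarith
    · nlinarith
    · linarith
  · exact Real.rpow_le_rpow_of_nonpos h2 h3 (by linarith)

lemma auxG_bound (γ n : ℕ) (s R a e : ℝ) (hs : 0 < s) (hsR : s * R < 1)
    (ha : 0 ≤ a) (he : 0 ≤ e) (r z : ℝ) (hr : 0 < r) (hz : 0 < z) (hz1 : z ≤ 1) 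
    (h : r * z ≤ R) :
    r ^ (n-1) * (z ^ (n + γ) * (1 - z ^ 2) ^ a) ≤ auxG γ n s R a e r z ∧
    auxG γ n s R a e r z ≤ (1 - s ^ 2 * R ^ 2) ^ (-e) * (r ^ (n-1) * (z ^ (n + γ) * (1 - z ^ 2) ^ a)) := by
  have := auxG_w s R e (r * z) hs hsR he (by positivity) h
  rw [mul_pow, ← mul_assoc] at this
  have h1 : 0 ≤ 1 - z ^ 2 := by nlinarith
  have h2 : 0 ≤ r ^ (n-1) * (z ^ (n + γ) * (1 - z ^ 2) ^ a) := by positivity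
  unfold auxG
  rw [if_pos h]
  constructor
  · nlinarith
  · nlinarith

lemma auxG_nonneg (γ n : ℕ) (s R a e : ℝ) (hs : 0 < s) (hsR : s * R < 1)
    (ha : 0 ≤ a) (he : 0 ≤ e) (r z : ℝ) (hr : 0 < r) (hz : 0 < z) (hz1 : z ≤ 1) :
    0 ≤ auxG γ n s R a e r z := by
  by_cases h : r * z ≤ R
  · refine le_trans ?_ (auxG_bound γ n s R a e hs hsR ha he r z hr hz hz1 h).1
    have h1 : 0 ≤ 1 - z ^ 2 := by nlinarith
    positivity
  · simp [auxG, h]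

lemma auxG_int (γ n : ℕ) (s R a e : ℝ) (hs : 0 < s) (hR : 0 < R) (hsR : s * R < 1)
    (ha : 0 ≤ a) (he : 0 ≤ e) :
    Integrable (fun p : ℝ × ℝ => auxG γ n s R a e p.1 p.2)
      ((volume.restrict (Set.Ioc 0 (1 / s))).prod (volume.restrict (Set.Ioc (0:ℝ) 1))) := by
  have hm : Measurable (fun p : ℝ × ℝ => auxG γ n s R a e p.1 p.2) := by
    unfold auxG
    apply Measurable.ite
    · exact measurableSet_le (by fun_prop) (by fun_prop)
    · fun_prop
    · fun_prop
  apply Integrable.of_bound hm.aestronglyMeasurable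
    ((1 - s ^ 2 * R ^ 2) ^ (-e) * (1 / s) ^ (n - 1))
  rw [Measure.prod_restrict]
  filter_upwards [ae_restrict_mem (measurableSet_Ioc.prod measurableSet_Ioc)] with p hp
  obtain ⟨⟨h1, h2⟩, h3, h4⟩ := hp
  rw [Real.norm_of_nonneg (auxG_nonneg γ n s R a e hs hsR ha he _ _ h1 h3 h4)]
  have hw := auxG_w s R e R hs hsR he hR.le le_rfl
  by_cases h : p.1 * p.2 ≤ R
  · refine (auxG_bound γ n s R a e hs hsR ha he _ _ h1 h3 h4 h).2.trans ?_
    gcongr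
    · linarith [hw.1]
    · have hz : 0 ≤ 1 - p.2 ^ 2 := by nlinarith
      have e1 : p.2 ^ (n + γ) ≤ 1 := pow_le_one₀ h3.le h4
      have e2 : (1 - p.2 ^ 2) ^ a ≤ 1 := Real.rpow_le_one hz (by nlinarith) ha
      have e3 : 0 ≤ (1 - p.2 ^ 2) ^ a := by positivity
      have e4 : p.1 ^ (n-1) ≤ (1 / s) ^ (n-1) := by gcongr
      have e5 : 0 ≤ p.1 ^ (n-1) := by positivity
      have e6 : p.2 ^ (n + γ) * (1 - p.2 ^ 2) ^ a ≤ 1 := mul_le_one₀ e1 e3 e2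
      nlinarith
  · have : 0 ≤ (1 - s ^ 2 * R ^ 2) ^ (-e) * (1 / s) ^ (n - 1) :=
      mul_nonneg (by linarith [hw.1]) (by positivity)
    simpa [auxG, h] using this

lemma aux_swap (γ n : ℕ) (s R a e : ℝ) (hs : 0 < s) (hR : 0 < R) (hsR : s * R < 1)
    (ha : 0 ≤ a) (he : 0 ≤ e) :
    ∫ r in (0:ℝ)..(1 / s), r ^ (n - 1) * ∫ z in (0:ℝ)..min 1 (R / r),
      z ^ (n + γ) * (1 - z ^ 2) ^ a * (1 - s ^ 2 * r ^ 2 * z ^ 2) ^ (-e)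
    = ∫ z in Set.Ioc (0:ℝ) 1, ∫ r in Set.Ioc 0 (1 / s), auxG γ n s R a e r z := by
  rw [← integral_prod_symm _ (auxG_int γ n s R a e hs hR hsR ha he),
    integral_prod _ (auxG_int γ n s R a e hs hR hsR ha he),
    intervalIntegral.integral_of_le (by positivity)]
  apply setIntegral_congr_fun measurableSet_Ioc
  intro r hr
  simp only
  rw [← intervalIntegral.integral_const_mul, ← aux_cut _ _ _ _ one_pos hR hr.1]
  simp only [auxG, mul_comm r]

lemma aux_inner_upper (γ n : ℕ) (hn : 1 ≤ n) (s R a e : ℝ) (hs : 0 < s) (hR : 0 < R)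
    (hsR : s * R < 1) (ha : 0 ≤ a) (he : 0 ≤ e) (z : ℝ) (hz : 0 < z) (hz1 : z ≤ 1) :
    ∫ r in Set.Ioc 0 (1 / s), auxG γ n s R a e r z ≤
      (1 - s ^ 2 * R ^ 2) ^ (-e) * (R ^ n / n * (z ^ γ * (1 - z ^ 2) ^ a)) := by
  have hw := (auxG_w s R e R hs hsR he hR.le le_rfl).1
  have h0 : 0 ≤ 1 - z ^ 2 := by nlinarith
  have key : ∫ r in Set.Ioc 0 (1 / s), auxG γ n s R a e r z ≤
      ∫ r in Set.Ioc 0 (1/s), (if r * z ≤ R then (1 - s ^ 2 * R ^ 2) ^ (-e) *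
        (r ^ (n-1) * (z ^ (n + γ) * (1 - z ^ 2) ^ a)) else 0) := by
    apply integral_mono_of_nonneg
    · filter_upwards [ae_restrict_mem measurableSet_Ioc] with r hr
      exact auxG_nonneg γ n s R a e hs hsR ha he r z hr.1 hz hz1
    · have : (fun r => if r * z ≤ R then (1 - s ^ 2 * R ^ 2) ^ (-e) *
        (r ^ (n-1) * (z ^ (n + γ) * (1 - z ^ 2) ^ a)) else 0) =
        {r : ℝ | r * z ≤ R}.indicator (fun r => (1 - s ^ 2 * R ^ 2) ^ (-e) *
        (r ^ (n-1) * (z ^ (n + γ) * (1 - z ^ 2) ^ a))) := by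
        ext r; simp [Set.indicator]
      rw [this]
      apply Integrable.indicator
      · exact (Continuous.integrableOn_Ioc (by fun_prop))
      · exact measurableSet_le (by fun_prop) (by fun_prop)
    · filter_upwards [ae_restrict_mem measurableSet_Ioc] with r hr
      by_cases h : r * z ≤ R
      · simpa [h] using (auxG_bound γ n s R a e hs hsR ha he r z hr.1 hz hz1 h).2
      · simp [auxG, h]
  refine key.trans ?_
  rw [aux_cut _ _ _ _ (by positivity) hR hz, intervalIntegral.integral_const_mul,
    intervalIntegral.integral_mul_const, integral_pow]
  rw [Nat.sub_add_cancel hn, zero_pow (by omega), sub_zero, Nat.cast_sub hn]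
  have hm : 0 ≤ min (1/s) (R/z) := by positivity
  have e1 : min (1/s) (R/z) ^ n ≤ (R / z) ^ n := by gcongr; exact min_le_right _ _
  push_cast
  rw [sub_add_cancel]
  calc _ ≤ (1 - s ^ 2 * R ^ 2) ^ (-e) * ((R/z) ^ n / n * (z ^ (n + γ) * (1 - z ^ 2) ^ a)) := by
        gcongr
    _ = _ := by
        rw [div_pow, pow_add]
        field_simp

lemma aux_inner_lower (γ n : ℕ) (hn : 1 ≤ n) (s R a e : ℝ) (hs : 0 < s) (hR : 0 < R)
    (hsR : s * R < 1) (ha : 0 ≤ a) (he : 0 ≤ e) (z : ℝ) (hz : 0 < z) (hz1 : z ≤ 1)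
    (hzR : s * R ≤ z) 
    (hi : Integrable (fun r => auxG γ n s R a e r z) (volume.restrict (Set.Ioc 0 (1 / s)))) :
    R ^ n / n * (z ^ γ * (1 - z ^ 2) ^ a) ≤ ∫ r in Set.Ioc 0 (1 / s), auxG γ n s R a e r z := by
  have h0 : 0 ≤ 1 - z ^ 2 := by nlinarith
  have key : ∫ r in Set.Ioc 0 (1/s), (if r * z ≤ R then 
        (r ^ (n-1) * (z ^ (n + γ) * (1 - z ^ 2) ^ a)) else 0) ≤
      ∫ r in Set.Ioc 0 (1 / s), auxG γ n s R a e r z := by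
    apply integral_mono_of_nonneg _ hi
    · filter_upwards [ae_restrict_mem measurableSet_Ioc] with r hr
      by_cases h : r * z ≤ R
      · simpa [h] using (auxG_bound γ n s R a e hs hsR ha he r z hr.1 hz hz1 h).1
      · simp [auxG, h]
    · filter_upwards [ae_restrict_mem measurableSet_Ioc] with r hr
      have := hr.1
      simp only [Pi.zero_apply]
      positivity
  refine le_trans (le_of_eq ?_) key
  rw [aux_cut _ _ _ _ (by positivity) hR hz, intervalIntegral.integral_mul_const, integral_pow]
  rw [Nat.sub_add_cancel hn, zero_pow (by omega), sub_zero, Nat.cast_sub hn, min_eq_right]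
  · push_cast
    rw [sub_add_cancel, div_pow, pow_add]
    field_simp
  · rw [div_le_div_iff₀ hz hs]; linarith

lemma aux_core (γ n : ℕ) (hn : 1 ≤ n) (s R a e : ℝ) (hs : 0 < s) (hR : 0 < R)
    (hsR : s * R < 1) (ha : 0 ≤ a) (he : 0 ≤ e) (I : ℝ)
    (hI : I = ∫ r in (0:ℝ)..(1 / s), r ^ (n - 1) * ∫ z in (0:ℝ)..min 1 (R / r),
      z ^ (n + γ) * (1 - z ^ 2) ^ a * (1 - s ^ 2 * r ^ 2 * z ^ 2) ^ (-e)) :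
    R ^ n / n * (∫ z in (s * R)..1, z ^ γ * (1 - z ^ 2) ^ a) ≤ I ∧
    I ≤ (1 - s ^ 2 * R ^ 2) ^ (-e) * (R ^ n / n * ∫ z in (0:ℝ)..1, z ^ γ * (1 - z ^ 2) ^ a) := by
  have hc : Continuous (fun z : ℝ => z ^ γ * (1 - z ^ 2) ^ a) := by
    have : Continuous (fun z : ℝ => (1 - z ^ 2) ^ a) :=
      Continuous.rpow_const (by fun_prop) (fun _ => Or.inr ha)
    fun_prop
  have hG := auxG_int γ n s R a e hs hR hsR ha he
  rw [aux_swap γ n s R a e hs hR hsR ha he] at hI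
  subst hI
  constructor
  · rw [← intervalIntegral.integral_const_mul, intervalIntegral.integral_of_le hsR.le]
    have hsub : Set.Ioc (s * R) 1 ⊆ Set.Ioc 0 1 := Set.Ioc_subset_Ioc_left (by positivity)
    calc _ ≤ ∫ z in Set.Ioc (s * R) 1, ∫ r in Set.Ioc 0 (1 / s), auxG γ n s R a e r z := by
          apply integral_mono_ae
          · exact Continuous.integrableOn_Ioc (by fun_prop)
          · exact (hG.integral_prod_right).mono_measure (Measure.restrict_mono hsub le_rfl)
          · have h2 := ae_mono (Measure.restrict_mono hsub (le_refl volume)) hG.prod_left_ae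
            filter_upwards [ae_restrict_mem measurableSet_Ioc, h2] with z hz hi
            exact aux_inner_lower γ n hn s R a e hs hR hsR ha he z
              (lt_of_le_of_lt (by positivity) hz.1) hz.2 hz.1.le hi
      _ ≤ _ := by
          apply setIntegral_mono_set hG.integral_prod_right _ hsub.eventuallyLE
          filter_upwards [ae_restrict_mem measurableSet_Ioc] with z hz
          apply setIntegral_nonneg measurableSet_Ioc
          intro r hr
          exact auxG_nonneg γ n s R a e hs hsR ha he r z hr.1 hz.1 hz.2
  · rw [← intervalIntegral.integral_const_mul, ← intervalIntegral.integral_const_mul,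
      intervalIntegral.integral_of_le zero_le_one]
    apply integral_mono_ae hG.integral_prod_right
    · exact Continuous.integrableOn_Ioc (by fun_prop)
    · filter_upwards [ae_restrict_mem measurableSet_Ioc] with z hz
      exact aux_inner_upper γ n hn s R a e hs hR hsR ha he z hz.1 hz.2

lemma aux_tail (γ : ℕ) (a t : ℝ) (d : ℕ) (hd : 2 ≤ d) (ha : 0 ≤ a) (had : a ≤ (d:ℝ) / 2)
    (ht : 0 ≤ t) (ht1 : t ≤ 1) :
    (∫ z in (0:ℝ)..1, z ^ γ * (1 - z ^ 2) ^ a) * (1 - 2 * (t * √(d:ℝ)) ^ (γ + 1)) ≤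
      ∫ z in t..1, z ^ γ * (1 - z ^ 2) ^ a := by
  have hc : Continuous (fun z : ℝ => z ^ γ * (1 - z ^ 2) ^ a) := by
    have : Continuous (fun z : ℝ => (1 - z ^ 2) ^ a) :=
      Continuous.rpow_const (by fun_prop) (fun _ => Or.inr ha)
    fun_prop
  have hsplit : ∀ x : ℝ, (∫ z in (0:ℝ)..x, z ^ γ * (1 - z ^ 2) ^ a) +
      (∫ z in x..1, z ^ γ * (1 - z ^ 2) ^ a) = ∫ z in (0:ℝ)..1, z ^ γ * (1 - z ^ 2) ^ a :=
    fun x => intervalIntegral.integral_add_adjacent_intervals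
      (hc.intervalIntegrable _ _) (hc.intervalIntegrable _ _)
  have hd' : (2:ℝ) ≤ d := by exact_mod_cast hd
  have h1 : ∫ z in (0:ℝ)..t, z ^ γ * (1 - z ^ 2) ^ a ≤ t ^ (γ + 1) / (γ + 1) := by
    calc _ ≤ ∫ z in (0:ℝ)..t, z ^ γ := by
          apply intervalIntegral.integral_mono_on ht (hc.intervalIntegrable _ _)
            ((continuous_pow γ).intervalIntegrable _ _)
          intro z hz
          have : (1 - z ^ 2) ^ a ≤ 1 :=
            Real.rpow_le_one (by nlinarith [hz.1, hz.2]) (by nlinarith) ha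
          have h0 := pow_nonneg hz.1 γ
          nlinarith
      _ = _ := by simp [integral_pow]
  have hx0 : 0 < √(d:ℝ) := by positivity
  have hxx : √(d:ℝ) ^ 2 = d := Real.sq_sqrt (by positivity)
  have hx1 : 1 / √(d:ℝ) ≤ 1 := by
    rw [div_le_one hx0]; nlinarith
  have h2 : (1 / √(d:ℝ)) ^ (γ + 1) / (γ + 1) * (1/2) ≤
      ∫ z in (0:ℝ)..1, z ^ γ * (1 - z ^ 2) ^ a := by
    calc _ = ∫ z in (0:ℝ)..(1 / √(d:ℝ)), z ^ γ * (1/2) := by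
          rw [intervalIntegral.integral_mul_const, integral_pow]; simp
      _ ≤ ∫ z in (0:ℝ)..(1 / √(d:ℝ)), z ^ γ * (1 - z ^ 2) ^ a := by
          apply intervalIntegral.integral_mono_on (by positivity)
            (Continuous.intervalIntegrable (by fun_prop) _ _) (hc.intervalIntegrable _ _)
          intro z hz
          have hz2 : z ^ 2 ≤ 1 / d := by
            have : z ^ 2 ≤ (1 / √(d:ℝ)) ^ 2 := pow_le_pow_left₀ hz.1 hz.2 2
            rwa [div_pow, hxx, one_pow] at this
          have hd1 : (1:ℝ) / d ≤ 1 / 2 := by gcongr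
          have hb := one_add_mul_self_le_rpow_one_add (s := -(1 / (d:ℝ))) (by linarith)
            (p := (d:ℝ)/2) (by linarith)
          have hb1 : (1:ℝ) + (d:ℝ) / 2 * -(1 / (d:ℝ)) = 1 / 2 := by field_simp; norm_num
          rw [hb1] at hb
          have hb2 : (1 + -(1 / (d:ℝ))) ^ ((d:ℝ)/2) ≤ (1 - z ^ 2) ^ ((d:ℝ)/2) :=
            Real.rpow_le_rpow (by linarith) (by linarith) (by positivity)
          have hb3 : (1 - z ^ 2) ^ ((d:ℝ)/2) ≤ (1 - z ^ 2) ^ a :=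
            Real.rpow_le_rpow_of_exponent_ge (by linarith) (by nlinarith) had
          exact mul_le_mul_of_nonneg_left (by linarith) (pow_nonneg hz.1 γ)
      _ ≤ _ := by
          rw [← hsplit (1 / √(d:ℝ))]
          have : 0 ≤ ∫ z in (1 / √(d:ℝ))..1, z ^ γ * (1 - z ^ 2) ^ a := by
            apply intervalIntegral.integral_nonneg hx1
            intro z hz
            have hz0 : 0 ≤ z := le_trans (by positivity) hz.1
            have : 0 ≤ 1 - z ^ 2 := by nlinarith [hz.2]
            positivity
          linarith
  have h3 : t ^ (γ + 1) / (γ + 1) ≤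
      (∫ z in (0:ℝ)..1, z ^ γ * (1 - z ^ 2) ^ a) * (2 * (t * √(d:ℝ)) ^ (γ + 1)) := by
    calc _ = (1 / √(d:ℝ)) ^ (γ + 1) / (γ + 1) * (1/2) * (2 * (t * √(d:ℝ)) ^ (γ + 1)) := by
          rw [div_pow, mul_pow, one_pow]; field_simp
      _ ≤ _ := by gcongr
  have := hsplit t
  linarith

lemma aux_A (m n : ℕ) (hn : 1 ≤ n) (s u : ℝ) (hs : 0 < s) (hu : 0 < u) (I : ℝ)
    (hI : I = ∫ r in (0:ℝ)..u, Real.cosh (s * r) ^ m * Real.sinh (s * r) ^ (n - 1)) :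
    u ^ n / n ≤ (s ^ (n - 1))⁻¹ * I ∧
    (s ^ (n - 1))⁻¹ * I ≤ Real.cosh (s * u) ^ (m + n) * (u ^ n / n) := by
  subst hI
  have hpow : ∫ r in (0:ℝ)..u, r ^ (n - 1) = u ^ n / n := by
    rw [integral_pow, Nat.sub_add_cancel hn, zero_pow (by omega), sub_zero, Nat.cast_sub hn]
    simp
  have hsn : 0 < s ^ (n - 1) := by positivity
  have hT : 1 ≤ Real.cosh (s * u) := Real.one_le_cosh _
  have hcont : Continuous (fun r => (s ^ (n - 1))⁻¹ *
      (Real.cosh (s * r) ^ m * Real.sinh (s * r) ^ (n - 1))) := by fun_prop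
  rw [← hpow, ← intervalIntegral.integral_const_mul, ← intervalIntegral.integral_const_mul]
  constructor
  · apply intervalIntegral.integral_mono_on hu.le
      (Continuous.intervalIntegrable (by fun_prop) _ _) (hcont.intervalIntegrable _ _)
    intro r hr
    have h0 : 0 ≤ s * r := mul_nonneg hs.le hr.1
    have h1 : s * r ≤ Real.sinh (s * r) := Real.self_le_sinh_iff.2 h0
    have h2 : 1 ≤ Real.cosh (s * r) ^ m := one_le_pow₀ (Real.one_le_cosh _)
    calc r ^ (n-1) = (s ^ (n - 1))⁻¹ * (1 * (s * r) ^ (n-1)) := by rw [mul_pow]; field_simp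
      _ ≤ _ := by gcongr
  · apply intervalIntegral.integral_mono_on hu.le
      (hcont.intervalIntegrable _ _) (Continuous.intervalIntegrable (by fun_prop) _ _)
    intro r hr
    have h0 : 0 ≤ s * r := mul_nonneg hs.le hr.1
    have hr0 := hr.1
    have hc : Real.cosh (s * r) ≤ Real.cosh (s * u) := by
      rw [Real.cosh_le_cosh, abs_of_nonneg h0, abs_of_nonneg (by positivity)]
      exact mul_le_mul_of_nonneg_left hr.2 hs.le
    have h1 : Real.sinh (s * r) ≤ s * r * Real.cosh (s * u) :=
      (aux_sinh_le _ h0).trans (mul_le_mul_of_nonneg_left hc h0)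
    have h2 : 0 ≤ Real.sinh (s * r) := Real.sinh_nonneg_iff.2 h0
    calc _ ≤ (s ^ (n - 1))⁻¹ * (Real.cosh (s * u) ^ m * (s * r * Real.cosh (s * u)) ^ (n-1)) := by
          gcongr
      _ = Real.cosh (s * u) ^ (m + (n - 1)) * r ^ (n-1) := by
          rw [mul_pow, mul_pow, pow_add]; field_simp
      _ ≤ _ := by
          gcongr
          omega

lemma aux_omega_pos (n : ℕ) (hn : 1 ≤ n) : 0 < omegaS n := by
  have : (0:ℝ) < n := by exact_mod_cast hn
  have := Real.Gamma_pos_of_pos (show (0:ℝ) < n / 2 by positivity)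
  unfold omegaS
  positivity

lemma aux_D (d γ n : ℕ) (hn : 1 ≤ n) (hd : n + γ + 2 ≤ d) :
    Dconst d (n + γ) γ * omegaS (d - γ) = omegaS n *
      (ProbabilityTheory.beta (((γ:ℝ) + 1) / 2) (((d:ℝ) - (n + γ : ℕ)) / 2) / 2)⁻¹ := by
  have h1 := aux_omega_pos (d - γ) (by omega)
  have hb : (0:ℝ) < ((d:ℝ) - (n + γ : ℕ)) / 2 := by
    have : ((n + γ : ℕ):ℝ) + 2 ≤ d := by exact_mod_cast hd
    linarith
  have hg : (0:ℝ) < ((γ:ℝ) + 1) / 2 := by positivity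
  unfold Dconst
  rw [Nat.add_sub_cancel]
  have e1 : omegaS (γ + 1) = 2 * π ^ (((γ:ℝ) + 1) / 2) / Real.Gamma (((γ:ℝ) + 1) / 2) := by
    unfold omegaS; push_cast; rfl
  have e2 : omegaS (d - (n + γ)) = 2 * π ^ (((d:ℝ) - (n + γ : ℕ)) / 2) /
      Real.Gamma (((d:ℝ) - (n + γ : ℕ)) / 2) := by
    unfold omegaS; rw [Nat.cast_sub (by omega)]
  have e3 : omegaS (d - (n + γ) + γ + 1) =
      2 * (π ^ (((γ:ℝ) + 1) / 2) * π ^ (((d:ℝ) - (n + γ : ℕ)) / 2)) /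
      Real.Gamma (((γ:ℝ) + 1) / 2 + ((d:ℝ) - (n + γ : ℕ)) / 2) := by
    unfold omegaS
    rw [← Real.rpow_add Real.pi_pos]
    have : (((d - (n + γ) + γ + 1 : ℕ) : ℝ)) / 2
        = ((γ:ℝ) + 1) / 2 + ((d:ℝ) - (n + γ : ℕ)) / 2 := by
      rw [Nat.cast_add, Nat.cast_add, Nat.cast_sub (by omega)]; push_cast; ring
    rw [this]
  have g1 := Real.Gamma_pos_of_pos hg
  have g2 := Real.Gamma_pos_of_pos hb
  have g3 := Real.Gamma_pos_of_pos (add_pos hg hb)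
  have p1 : 0 < π ^ (((γ:ℝ) + 1) / 2) := by positivity
  have p2 : 0 < π ^ (((d:ℝ) - (n + γ : ℕ)) / 2) := by positivity
  rw [e1, e2, e3, ProbabilityTheory.beta]
  generalize Real.Gamma (((γ:ℝ) + 1) / 2 + ((d:ℝ) - (n + γ : ℕ)) / 2) = G3 at *
  generalize Real.Gamma (((d:ℝ) - (n + γ : ℕ)) / 2) = G2 at *
  generalize Real.Gamma (((γ:ℝ) + 1) / 2) = G1 at *
  generalize π ^ (((γ:ℝ) + 1) / 2) = P1 at *
  generalize π ^ (((d:ℝ) - (n + γ : ℕ)) / 2) = P2 at *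
  field_simp

lemma aux_P (d γ n : ℕ) (hn : 1 ≤ n) (hd : n + γ + 2 ≤ d) (K u : ℝ) (hK : K < 0) (hu : 0 < u)
    (hε : 2 * (√(-K) * u * √(d:ℝ)) ^ (γ + 1) ≤ 1) :
    (1 - 2 * (√(-K) * u * √(d:ℝ)) ^ (γ + 1)) / Real.cosh (√(-K) * u) ^ (2 * d)
      ≤ Pprob d (n + γ) γ K u ∧
    Pprob d (n + γ) γ K u ≤ Real.cosh (√(-K) * u) ^ (2 * d) := by
  have hs : 0 < √(-K) := Real.sqrt_pos.2 (by linarith)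
  have hKs : K = -(√(-K)) ^ 2 := by rw [Real.sq_sqrt (by linarith)]; ring
  have hD := aux_D d γ n hn hd
  have hd' : ((n + γ : ℕ):ℝ) + 2 ≤ d := by exact_mod_cast hd
  have hb : (0:ℝ) < ((d:ℝ) - (n + γ : ℕ)) / 2 := by linarith
  rw [← aux_beta_sq γ _ hb] at hD
  have hω := aux_omega_pos n hn
  unfold Pprob
  rw [hD]
  have hm : n + γ ≤ d := by omega
  set s := √(-K) with hsdef
  set T := Real.cosh (s * u) with hT
  have hT1 : 1 ≤ T := Real.one_le_cosh _
  have hT0 : 0 < T := by linarith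
  -- R
  have hRdef : RK K u = Real.sinh (s * u) / (s * T) := by
    unfold RK
    rw [← hsdef, add_comm, ← Real.cosh_sq, Real.sqrt_sq hT0.le]
  have hsu : 0 < s * u := by positivity
  have hsh := Real.sinh_pos_iff.2 hsu
  set R := RK K u with hR
  have hR0 : 0 < R := by rw [hRdef]; positivity
  have hsR : s * R = Real.sinh (s * u) / T := by rw [hRdef]; field_simp
  have hsR1 : s * R < 1 := by
    rw [hsR, div_lt_one hT0]; exact Real.sinh_lt_cosh _
  have hRu : R ≤ u := by
    rw [hRdef, div_le_iff₀ (by positivity)]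
    have := aux_sinh_le (s * u) hsu.le
    linarith
  have hRl : u / T ≤ R := by
    rw [hRdef, div_le_div_iff₀ hT0 (by positivity)]
    have := mul_le_mul_of_nonneg_right (Real.self_le_sinh_iff.2 hsu.le) hT0.le
    linarith
  have hM : (1 - s ^ 2 * R ^ 2) ^ (-(((d:ℝ) + 1) / 2)) = T ^ (d + 1) := by
    have : 1 - s ^ 2 * R ^ 2 = (T ^ 2)⁻¹ := by
      rw [← mul_pow, hsR, div_pow, Real.sinh_sq]; field_simp; simp [hT]
    rw [this, Real.rpow_neg (by positivity), Real.inv_rpow (by positivity), inv_inv,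
      ← Real.rpow_natCast T 2, ← Real.rpow_mul hT0.le, ← Real.rpow_natCast]
    congr 1; push_cast; ring
  -- C
  have hC : Cconst K d (d - (n + γ) + γ) u = omegaS n * ((s ^ (n - 1))⁻¹ *
      ∫ r in (0:ℝ)..u, Real.cosh (s * r) ^ (d - n) * Real.sinh (s * r) ^ (n - 1)) := by
    unfold Cconst
    have e1 : d - (n + γ) + γ = d - n := by omega
    have e2 : d - (d - n) = n := by omega
    rw [e1, e2, ← hsdef, mul_assoc]
    congr 2
    rw [← Real.rpow_natCast, ← Real.rpow_neg hs.le]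
    congr 1
    rw [Nat.cast_sub (by omega), Nat.cast_sub hn]
    push_cast; ring
  obtain ⟨hA1, hA2⟩ := aux_A (d - n) n hn s u hs hu _ rfl
  rw [hC]
  have hdn : d - n + n = d := by omega
  rw [← hT, hdn] at hA2
  set A := (s ^ (n - 1))⁻¹ *
      ∫ r in (0:ℝ)..u, Real.cosh (s * r) ^ (d - n) * Real.sinh (s * r) ^ (n - 1) with hA
  have hint : (∫ r in (0:ℝ)..(1 / s), r ^ (((n + γ : ℕ) : ℝ) - (γ : ℝ) - 1) *
        ∫ z in (0:ℝ)..(min 1 (R / r)),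
          z ^ (n + γ) * (1 - z ^ 2) ^ (((d : ℝ) - ((n + γ : ℕ) : ℝ)) / 2 - 1) *
            (1 + K * r ^ 2 * z ^ 2) ^ (-((d : ℝ) + 1) / 2)) =
      ∫ r in (0:ℝ)..(1 / s), r ^ (n - 1) * ∫ z in (0:ℝ)..min 1 (R / r),
        z ^ (n + γ) * (1 - z ^ 2) ^ (((d : ℝ) - ((n + γ : ℕ) : ℝ)) / 2 - 1) *
          (1 - s ^ 2 * r ^ 2 * z ^ 2) ^ (-(((d:ℝ) + 1) / 2)) := by
    have e1 : ((n + γ : ℕ) : ℝ) - (γ : ℝ) - 1 = ((n - 1 : ℕ) : ℝ) := by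
      rw [Nat.cast_sub hn]; push_cast; ring
    have e2 : ∀ r z : ℝ, 1 + K * r ^ 2 * z ^ 2 = 1 - s ^ 2 * r ^ 2 * z ^ 2 := by
      intro r z; nth_rw 1 [hKs]; ring
    simp only [e1, Real.rpow_natCast, e2, neg_div]
  rw [hint]
  have ha : 0 ≤ ((d : ℝ) - ((n + γ : ℕ) : ℝ)) / 2 - 1 := by linarith
  obtain ⟨hI1, hI2⟩ := aux_core γ n hn s R (((d : ℝ) - ((n + γ : ℕ) : ℝ)) / 2 - 1)
    (((d:ℝ) + 1) / 2) hs hR0 hsR1 ha (by positivity) _ rfl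
  rw [hM] at hI2
  have htail := aux_tail γ (((d : ℝ) - ((n + γ : ℕ) : ℝ)) / 2 - 1) (s * R) d (by omega) ha
    (by have : (0:ℝ) ≤ ((n + γ : ℕ) : ℝ) := by positivity
        linarith) (by positivity) hsR1.le
  set S := ∫ z in (0:ℝ)..1, z ^ γ * (1 - z ^ 2) ^ (((d : ℝ) - ((n + γ : ℕ) : ℝ)) / 2 - 1) with hS
  have hS0 : 0 < S := by
    rw [hS, aux_beta_sq γ _ hb]
    have := ProbabilityTheory.beta_pos (show (0:ℝ) < ((γ:ℝ) + 1) / 2 by positivity) hb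
    positivity
  generalize (∫ r in (0:ℝ)..(1 / s), r ^ (n - 1) * ∫ z in (0:ℝ)..min 1 (R / r),
        z ^ (n + γ) * (1 - z ^ 2) ^ (((d : ℝ) - ((n + γ : ℕ) : ℝ)) / 2 - 1) *
          (1 - s ^ 2 * r ^ 2 * z ^ 2) ^ (-(((d:ℝ) + 1) / 2))) = I at *
  have hn0 : (0:ℝ) < n := by exact_mod_cast hn
  have hA0 : 0 < A := lt_of_lt_of_le (by positivity) hA1
  have hgoal : omegaS n * S⁻¹ / (omegaS n * A) * I = I / (S * A) := by field_simp
  rw [hgoal]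
  have hεR : (s * R * √(d:ℝ)) ^ (γ + 1) ≤ (s * u * √(d:ℝ)) ^ (γ + 1) := by gcongr
  constructor
  · rw [div_le_div_iff₀ (by positivity) (by positivity)]
    set ε := 2 * (s * u * √(d:ℝ)) ^ (γ + 1) with hεd
    have hε0 : 0 ≤ 1 - ε := by linarith
    have k1 : u ^ n ≤ R ^ n * T ^ n := by
      rw [← mul_pow]
      gcongr
      rwa [div_le_iff₀ hT0] at hRl
    have k2 : T ^ n ≤ T ^ d := pow_le_pow_right₀ hT1 (by omega)
    have k3 : R ^ n / n * (S * (1 - ε)) ≤ I := by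
      refine le_trans ?_ hI1
      refine mul_le_mul_of_nonneg_left (le_trans ?_ htail) (by positivity)
      exact mul_le_mul_of_nonneg_left (by linarith) hS0.le
    calc (1 - ε) * (S * A) ≤ (1 - ε) * (S * (T ^ d * ((R ^ n * T ^ d) / n))) := by
          gcongr
          refine hA2.trans ?_
          gcongr
          refine k1.trans ?_
          gcongr
      _ = (R ^ n / n * (S * (1 - ε))) * T ^ (2 * d) := by ring
      _ ≤ _ := by gcongr
  · rw [div_le_iff₀ (by positivity)]
    calc I ≤ T ^ (d + 1) * (R ^ n / n * S) := hI2
      _ ≤ T ^ (2 * d) * (u ^ n / n * S) := by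
          gcongr
          omega
      _ ≤ T ^ (2 * d) * (S * A) := by
          rw [mul_comm S A]; gcongr

lemma aux_coshpow (s u : ℝ) (d : ℕ) :
    Real.cosh (s * u) ^ (2 * d) ≤ Real.exp (s ^ 2 * d * u ^ 2) := by
  calc _ ≤ Real.exp ((s * u) ^ 2 / 2) ^ (2 * d) := by
        gcongr
        exact Real.cosh_le_exp_half_sq _
    _ = _ := by
        rw [← Real.exp_nat_mul]; congr 1; push_cast; ring

/-- subcritical phase, `-K(d)·d → 0` implies the intersection probability tends to 1. -/
theorem phase_transition_subcritical (q γ : ℕ) (hq : 1 ≤ q) (hγ : γ ≤ q - 1) (u : ℝ)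
    (hu : 0 < u) (K : ℕ → ℝ) (hK : ∀ d : ℕ, 2 ≤ d → K d < 0)
    (h : Tendsto (fun d : ℕ => -K d * (d : ℝ)) atTop (nhds 0)) :
    Tendsto (fun d : ℕ => Pprob d q γ (K d) u) atTop (nhds 1) := by
  obtain ⟨n, rfl⟩ : ∃ n, q = n + γ := ⟨q - γ, by omega⟩
  have hn : 1 ≤ n := by omega
  have hε : Tendsto (fun d : ℕ => 2 * (√(-K d * (d:ℝ)) * u) ^ (γ + 1)) atTop (nhds 0) := by
    have h1 := ((((h.sqrt).mul_const u).pow (γ + 1)).const_mul 2)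
    simpa using h1
  have hE : Tendsto (fun d : ℕ => Real.exp (-K d * (d:ℝ) * u ^ 2)) atTop (nhds 1) := by
    have h1 := (Real.continuous_exp.tendsto _).comp (h.mul_const (u ^ 2))
    simpa [Function.comp_def] using h1
  have hL : Tendsto (fun d : ℕ => (1 - 2 * (√(-K d * (d:ℝ)) * u) ^ (γ + 1)) /
      Real.exp (-K d * (d:ℝ) * u ^ 2)) atTop (nhds 1) := by
    have h1 := (hε.const_sub 1).div hE one_ne_zero
    rw [sub_zero, div_one] at h1
    exact h1
  have hev : ∀ᶠ d : ℕ in atTop, (1 - 2 * (√(-K d * (d:ℝ)) * u) ^ (γ + 1)) /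
      Real.exp (-K d * (d:ℝ) * u ^ 2) ≤ Pprob d (n + γ) γ (K d) u ∧
      Pprob d (n + γ) γ (K d) u ≤ Real.exp (-K d * (d:ℝ) * u ^ 2) := by
    filter_upwards [eventually_ge_atTop (n + γ + 2), hε.eventually (eventually_le_nhds one_pos)]
      with d hd hd1
    have hKd := hK d (by omega)
    have e1 : √(-K d * (d:ℝ)) * u = √(-K d) * u * √(d:ℝ) := by
      rw [Real.sqrt_mul (by linarith)]; ring
    rw [e1] at hd1 ⊢
    obtain ⟨p1, p2⟩ := aux_P d γ n hn hd (K d) u hKd hu hd1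
    have hc := aux_coshpow (√(-K d)) u d
    rw [Real.sq_sqrt (by linarith)] at hc
    refine ⟨le_trans ?_ p1, p2.trans hc⟩
    exact div_le_div_of_nonneg_left (by linarith) (pow_pos (Real.cosh_pos _) _) hc
  exact tendsto_of_tendsto_of_tendsto_of_le_of_le' hL hE
    (hev.mono fun _ h => h.1) (hev.mono fun _ h => h.2)
end

section
/- Fix integers q ≥ 1 and γ with 0 ≤ γ ≤ q-1, a real u > 0, and for each integer d ≥ 2 a real K(d) < 0. If lim_{d→∞} (-K(d))·d = ∞, then lim_{d→∞} P(d,q,γ,K(d),u) = 0 (supercritical phase of the phase transition). -/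
open Real MeasureTheory Filter Asymptotics

lemma aux_swap_s5 (n q : ℕ) (hnq : n ≤ q) (b R M : ℝ) (hb : 0 < b) (hR : 0 < R) (p W V : ℝ → ℝ)
    (hp : ContinuousOn p (Set.Icc 0 1)) (hp0 : ∀ z ∈ Set.Icc (0:ℝ) 1, 0 ≤ p z)
    (hWm : Measurable W) (hW0 : ∀ x, 0 ≤ W x) (hWM : ∀ x, W x ≤ M)
    (hmono : MonotoneOn W (Set.Icc 0 R)) (hout : ∀ x, R < x → W x = 0)
    (hV : ∀ x ∈ Set.Icc 0 R, V x = W x) :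
    ∫ r in (0:ℝ)..b, r ^ n * ∫ z in (0:ℝ)..(min 1 (R / r)), z ^ q * p z * V (r * z)
      ≤ b / R * (∫ z in (0:ℝ)..1, z ^ (q - n) * p z) * ∫ x in (0:ℝ)..R, x ^ n * V x := by
  have hVG : ∫ x in (0:ℝ)..R, x ^ n * V x = ∫ x in (0:ℝ)..R, x ^ n * W x := by
    apply intervalIntegral.integral_congr
    intro x hx
    rw [Set.uIcc_of_le hR.le] at hx
    simp only [hV x hx]
  rw [hVG]
  have hWi : ∀ (f : ℝ → ℝ) (s : Set ℝ) (g : ℝ → ℝ), Measurable g → IntegrableOn f s →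
      IntegrableOn (fun x => f x * W (g x)) s := by
    intro f s g hg hf
    refine Integrable.mul_bdd (c := M) hf (hWm.comp hg).aestronglyMeasurable ?_
    refine ae_of_all _ fun x => ?_
    rw [Real.norm_eq_abs, abs_of_nonneg (hW0 _)]
    exact hWM _
  have hpi : IntegrableOn (fun z : ℝ => z ^ q * p z) (Set.Ioc 0 1) := by
    have : ContinuousOn (fun z : ℝ => z ^ q * p z) (Set.Icc 0 1) := by fun_prop
    exact (this.integrableOn_Icc).mono_set Set.Ioc_subset_Icc_self
  have hpi' : IntegrableOn (fun z : ℝ => z ^ (q - n) * p z) (Set.Ioc 0 1) := by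
    have : ContinuousOn (fun z : ℝ => z ^ (q - n) * p z) (Set.Icc 0 1) := by fun_prop
    exact (this.integrableOn_Icc).mono_set Set.Ioc_subset_Icc_self
  have hri : ∀ c : ℝ, IntegrableOn (fun r : ℝ => r ^ n) (Set.Ioc 0 c) := by
    intro c
    have : ContinuousOn (fun z : ℝ => z ^ n) (Set.Icc 0 c) := by fun_prop
    exact (this.integrableOn_Icc).mono_set Set.Ioc_subset_Icc_self
  have step1 : ∫ r in (0:ℝ)..b, r ^ n * ∫ z in (0:ℝ)..(min 1 (R / r)), z ^ q * p z * V (r * z)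
      = ∫ r in Set.Ioc 0 b, ∫ z in Set.Ioc (0:ℝ) 1, r ^ n * (z ^ q * p z) * W (r * z) := by
    rw [intervalIntegral.integral_of_le hb.le]
    apply setIntegral_congr_fun measurableSet_Ioc
    intro r hr
    have hr0 : 0 < r := hr.1
    have hm : 0 ≤ min 1 (R / r) := le_min zero_le_one (by positivity)
    simp only
    rw [intervalIntegral.integral_of_le hm, ← integral_const_mul]
    rw [setIntegral_eq_of_subset_of_forall_sdiff_eq_zero (s := Set.Ioc 0 (min 1 (R / r)))
      (t := Set.Ioc (0:ℝ) 1) measurableSet_Ioc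
      (Set.Ioc_subset_Ioc_right (min_le_left _ _))]
    · apply setIntegral_congr_fun measurableSet_Ioc
      intro z hz
      have h1 : z ≤ R / r := hz.2.trans (min_le_right _ _)
      have h2 : r * z ≤ R := by rw [le_div_iff₀ hr0] at h1; linarith
      simp only
      rw [hV _ ⟨mul_nonneg hr0.le hz.1.le, h2⟩]; ring
    · intro z hz
      have h1 : R / r < z := by
        by_contra hcon
        exact hz.2 ⟨hz.1.1, le_min hz.1.2 (not_lt.1 hcon)⟩
      have h2 : R < r * z := by rw [div_lt_iff₀ hr0] at h1; linarith
      rw [hout _ h2, mul_zero]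
  rw [step1, integral_integral_swap]
  swap
  · have h1 : Integrable (fun x : ℝ × ℝ => x.1 ^ n * (x.2 ^ q * p x.2))
      ((volume.restrict (Set.Ioc 0 b)).prod (volume.restrict (Set.Ioc (0:ℝ) 1))) :=
      Integrable.mul_prod (hri b) hpi
    refine Integrable.mul_bdd (c := M) h1 
      (hWm.comp (measurable_fst.mul measurable_snd)).aestronglyMeasurable ?_
    refine ae_of_all _ fun x => ?_
    rw [Real.norm_eq_abs, abs_of_nonneg (hW0 _)]
    exact hWM _
  set G := ∫ x in (0:ℝ)..R, x ^ n * W x with hG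
  have hG0 : 0 ≤ G := by
    apply intervalIntegral.integral_nonneg hR.le
    intro x hx
    exact mul_nonneg (pow_nonneg hx.1 _) (hW0 _)
  have inner : ∀ z ∈ Set.Ioc (0:ℝ) 1, ∫ r in Set.Ioc 0 b, r ^ n * W (r * z)
      ≤ (1 / z) ^ n * (b / R) * G := by
    intro z hz
    have hz0 : 0 < z := hz.1
    set c := min b (R / z) with hc
    have hc0 : 0 < c := lt_min hb (by positivity)
    rw [setIntegral_eq_of_subset_of_forall_sdiff_eq_zero (s := Set.Ioc 0 c)
      (t := Set.Ioc (0:ℝ) b) measurableSet_Ioc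
      (Set.Ioc_subset_Ioc_right (min_le_left _ _))]
    swap
    · intro r hr
      have h1 : R / z < r := by
        by_contra hcon
        exact hr.2 ⟨hr.1.1, le_min hr.1.2 (not_lt.1 hcon)⟩
      have h2 : R < r * z := by rw [div_lt_iff₀ hz0] at h1; linarith
      rw [hout _ h2, mul_zero]
    rw [← intervalIntegral.integral_of_le hc0.le]
    set t := c / R with ht
    have ht0 : 0 < t := by positivity
    have e1 : ∫ r in (0:ℝ)..c, r ^ n * W (r * z) =
        t * ∫ x in (0:ℝ)..R, (t * x) ^ n * W (t * x * z) := by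
      have := intervalIntegral.integral_comp_mul_left (a := 0) (b := R)
        (fun r : ℝ => r ^ n * W (r * z)) ht0.ne'
      rw [this, smul_eq_mul, ← mul_assoc, mul_inv_cancel₀ ht0.ne', one_mul, mul_zero]
      congr 1
      rw [ht]; field_simp
    have htz : t * z ≤ 1 := by
      have : c ≤ R / z := min_le_right _ _
      rw [le_div_iff₀ hz0] at this
      rw [ht, div_mul_eq_mul_div, div_le_one hR]; exact this
    have e2 : ∫ x in (0:ℝ)..R, (t * x) ^ n * W (t * x * z) ≤ ∫ x in (0:ℝ)..R, t ^ n * (x ^ n * W x) := by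
      apply intervalIntegral.integral_mono_on hR.le
      · rw [intervalIntegrable_iff_integrableOn_Ioc_of_le hR.le]
        apply hWi _ _ (fun x => t * x * z) (by fun_prop)
        have : ContinuousOn (fun x : ℝ => (t * x) ^ n) (Set.Icc 0 R) := by fun_prop
        exact (this.integrableOn_Icc).mono_set Set.Ioc_subset_Icc_self
      · rw [intervalIntegrable_iff_integrableOn_Ioc_of_le hR.le]
        exact (hWi _ _ (fun x => x) (by fun_prop) (hri R)).const_mul _
      · intro x hx
        rw [mul_pow, mul_assoc]
        have hx0 := hx.1
        have hxx : t * x * z ≤ x := by nlinarith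
        gcongr
        exact hmono ⟨by positivity, hxx.trans hx.2⟩ hx hxx
    rw [intervalIntegral.integral_const_mul] at e2
    rw [e1]
    have htz' : t ≤ 1 / z := by rw [le_div_iff₀ hz0]; exact htz
    have htb : t ≤ b / R := by rw [ht]; gcongr; exact min_le_left _ _
    calc _ ≤ t * (t ^ n * G) := by gcongr
      _ = t ^ n * t * G := by ring
      _ ≤ _ := by gcongr
  calc _ = ∫ z in Set.Ioc (0:ℝ) 1, (z ^ q * p z) * ∫ r in Set.Ioc 0 b, r ^ n * W (r * z) := by
        congr 1; ext z
        rw [← integral_const_mul]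
        congr 1; ext r; ring
    _ ≤ ∫ z in Set.Ioc (0:ℝ) 1, (b / R * G) * (z ^ (q - n) * p z) := by
        apply integral_mono_of_nonneg
        · rw [EventuallyLE, ae_restrict_iff' measurableSet_Ioc]
          refine ae_of_all _ fun z hz => ?_
          have hpz := hp0 z ⟨hz.1.le, hz.2⟩
          have hz0 := hz.1.le
          refine mul_nonneg (by positivity) ?_
          apply setIntegral_nonneg measurableSet_Ioc
          intro r hr
          exact mul_nonneg (pow_nonneg hr.1.le _) (hW0 _)
        · exact hpi'.const_mul _
        · rw [EventuallyLE, ae_restrict_iff' measurableSet_Ioc]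
          refine ae_of_all _ fun z hz => ?_
          have hpz := hp0 z ⟨hz.1.le, hz.2⟩
          have hz0 := hz.1
          calc _ ≤ (z ^ q * p z) * ((1 / z) ^ n * (b / R) * G) := by
                gcongr; exact inner z hz
            _ = _ := by
                obtain ⟨m, rfl⟩ := Nat.exists_eq_add_of_le hnq
                rw [Nat.add_sub_cancel_left, pow_add, one_div, inv_pow]
                field_simp
    _ = _ := by
        rw [integral_const_mul, intervalIntegral.integral_of_le zero_le_one]; ring

lemma RK_eq (K u : ℝ) : RK K u = Real.sinh (√(-K) * u) / (√(-K) * Real.cosh (√(-K) * u)) := by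
  unfold RK
  congr 2
  rw [add_comm, ← Real.cosh_sq, Real.sqrt_sq (Real.cosh_pos _).le]

lemma one_add_RK (K u : ℝ) (hK : K < 0) :
    1 + K * RK K u ^ 2 = (Real.cosh (√(-K) * u) ^ 2)⁻¹ := by
  have hk : 0 < √(-K) := Real.sqrt_pos.2 (by linarith)
  have hk2 : √(-K) ^ 2 = -K := Real.sq_sqrt (by linarith)
  have hc := Real.cosh_pos (√(-K) * u)
  have hs := Real.cosh_sq (√(-K) * u)
  rw [RK_eq]
  have hKe : K = -(√(-K)) ^ 2 := by linarith
  generalize √(-K) = k at *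
  subst hKe
  field_simp
  linarith

lemma aux_C (d n : ℕ) (K u : ℝ) (hK : K < 0) (hu : 0 < u) (hn : n + 1 ≤ d) :
    ∫ x in (0:ℝ)..(RK K u), x ^ n * (1 + K * x ^ 2) ^ (-((d : ℝ) + 1) / 2) =
    (√(-K)) ^ (-(n:ℝ)) * ∫ r in (0:ℝ)..u,
      Real.cosh (Real.sqrt (-K) * r) ^ (d - 1 - n) * Real.sinh (Real.sqrt (-K) * r) ^ n := by
  have hk : 0 < √(-K) := Real.sqrt_pos.2 (by linarith)
  have h0 : RK K 0 = 0 := by simp [RK]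
  have hder : ∀ x, HasDerivAt (RK K) ((Real.cosh (√(-K) * x) ^ 2)⁻¹) x := by
    intro x
    have e : RK K = fun u => Real.sinh (√(-K) * u) / (√(-K) * Real.cosh (√(-K) * u)) := by
      ext u; exact RK_eq K u
    rw [e]
    have hc := Real.cosh_pos (√(-K) * x)
    have hs := Real.cosh_sq (√(-K) * x)
    have h1 : HasDerivAt (fun u => √(-K) * u) √(-K) x := by
      simpa using (hasDerivAt_id x).const_mul √(-K)
    have := (h1.sinh).div ((h1.cosh).const_mul √(-K)) (by positivity)
    refine this.congr_deriv ?_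
    field_simp
    linarith
  have key := intervalIntegral.integral_comp_mul_deriv'' (a := 0) (b := u) (f := RK K)
    (f' := fun x => (Real.cosh (√(-K) * x) ^ 2)⁻¹)
    (g := fun x => x ^ n * (1 + K * x ^ 2) ^ (-((d : ℝ) + 1) / 2))
    (fun x _ => (hder x).continuousAt.continuousWithinAt)
    (fun x _ => (hder x).hasDerivWithinAt)
    (by
      apply Continuous.continuousOn
      apply Continuous.inv₀ (by fun_prop)
      intro x; have := Real.cosh_pos (√(-K) * x); positivity)
    (by
      apply ContinuousOn.mul (by fun_prop)
      apply ContinuousOn.rpow_const (by fun_prop)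
      rintro _ ⟨y, -, rfl⟩
      left
      rw [one_add_RK K y hK]
      have := Real.cosh_pos (√(-K) * y); positivity)
  rw [h0] at key
  rw [← key, ← intervalIntegral.integral_const_mul]
  apply intervalIntegral.integral_congr
  intro x _
  simp only [Function.comp]
  rw [one_add_RK K x hK, RK_eq]
  have hc := Real.cosh_pos (√(-K) * x)
  have e1 : ((Real.cosh (√(-K) * x) ^ 2)⁻¹) ^ (-((d : ℝ) + 1) / 2) = Real.cosh (√(-K) * x) ^ (d + 1) := by
    rw [Real.inv_rpow (by positivity), ← Real.rpow_neg (by positivity), ← Real.rpow_natCast,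
      ← Real.rpow_mul hc.le, ← Real.rpow_natCast]
    congr 1; push_cast; ring
  rw [e1, Real.rpow_neg hk.le, Real.rpow_natCast]
  obtain ⟨m, rfl⟩ := Nat.exists_eq_add_of_le hn
  have : n + 1 + m - 1 - n = m := by omega
  rw [this, div_pow, mul_pow, show n + 1 + m + 1 = n + (m + 2) by ring, pow_add, pow_add]
  field_simp

lemma gamma_half (x : ℝ) (hx : 0 < x) : Real.Gamma (x + 1 / 2) ≤ √x * Real.Gamma x := by
  have h := Real.Gamma_mul_add_mul_le_rpow_Gamma_mul_rpow_Gamma (s := x) (t := x + 1) (a := 1/2)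
    (b := 1/2) hx (by linarith) (by norm_num) (by norm_num) (by norm_num)
  have hg := Real.Gamma_pos_of_pos hx
  rw [Real.Gamma_add_one hx.ne', ← Real.sqrt_eq_rpow, ← Real.sqrt_eq_rpow, Real.sqrt_mul hx.le] at h
  calc _ = Real.Gamma (1/2 * x + 1/2 * (x+1)) := by congr 1; ring
    _ ≤ _ := h
    _ = √x * (√(Real.Gamma x) * √(Real.Gamma x)) := by ring
    _ = _ := by rw [Real.mul_self_sqrt hg.le]

lemma gamma_ratio (x L : ℝ) (hx : 0 < x) (j : ℕ) (hL : x + (j : ℝ) / 2 ≤ L) :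
    Real.Gamma (x + (j : ℝ) / 2) ≤ √L ^ j * Real.Gamma x := by
  induction j with
  | zero => simp
  | succ j ih =>
    push_cast at hL ⊢
    have h1 := ih (by linarith)
    have h2 := gamma_half (x + (j:ℝ)/2) (by positivity)
    have hg := Real.Gamma_pos_of_pos (show 0 < x + (j:ℝ)/2 by positivity)
    calc _ = Real.Gamma (x + (j:ℝ)/2 + 1/2) := by congr 1; ring
      _ ≤ _ := h2
      _ ≤ √L * (√L ^ j * Real.Gamma x) := by
          gcongr; linarith
      _ = _ := by ring

lemma omegaS_pos (n : ℕ) (hn : 0 < n) : 0 < omegaS n := by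
  unfold omegaS
  have := Real.Gamma_pos_of_pos (show 0 < (n:ℝ)/2 by positivity)
  positivity

lemma omega_ratio (N j : ℕ) (hN : 0 < N) (L : ℝ) (hL : (N:ℝ)/2 + (j : ℝ) / 2 ≤ L) :
    omegaS N / omegaS (N + j) ≤ √L ^ j := by
  have hy : 0 < (N:ℝ)/2 := by positivity
  have h1 := gamma_ratio _ L hy j hL
  have hg := Real.Gamma_pos_of_pos hy
  have hg2 := Real.Gamma_pos_of_pos (show 0 < (N:ℝ)/2 + (j:ℝ)/2 by positivity)
  have hp : (1:ℝ) ≤ Real.pi ^ ((j:ℝ)/2) :=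
    Real.one_le_rpow (by linarith [Real.pi_gt_three]) (by positivity)
  have hpp : 0 < Real.pi ^ ((N:ℝ)/2) := by positivity
  rw [div_le_iff₀ (omegaS_pos _ (by omega))]
  unfold omegaS
  push_cast
  rw [add_div, Real.rpow_add Real.pi_pos, mul_div_assoc', div_le_div_iff₀ hg hg2]
  calc _ ≤ 2 * π ^ ((N:ℝ)/2) * (√L ^ j * Real.Gamma ((N:ℝ)/2)) := by gcongr
    _ = √L ^ j * (2 * (π ^ ((N:ℝ)/2) * 1)) * Real.Gamma ((N:ℝ)/2) := by ring
    _ ≤ _ := by gcongr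

lemma beta_bound (j : ℕ) (a : ℝ) (ha : 0 < a) :
    ∫ z in (0:ℝ)..1, z ^ j * (1 - z ^ 2) ^ a ≤
      Real.Gamma (((j:ℝ) + 1) / 2) / √a ^ (j + 1) := by
  have hint := integrableOn_rpow_mul_exp_neg_mul_sq ha (s := j) (by linarith [Nat.cast_nonneg (α := ℝ) j])
  have hval := integral_rpow_mul_exp_neg_mul_rpow (p := 2) (q := j) (b := a) (by norm_num) (by linarith [Nat.cast_nonneg (α := ℝ) j]) ha
  have hg := Real.Gamma_pos_of_pos (show 0 < ((j:ℝ)+1)/2 by positivity)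
  rw [intervalIntegral.integral_of_le zero_le_one]
  have e : a ^ (-((j:ℝ)+1)/2) = (√a ^ (j+1))⁻¹ := by
    rw [Real.sqrt_eq_rpow, ← Real.rpow_natCast, ← Real.rpow_mul ha.le, ← Real.rpow_neg ha.le]
    congr 1; push_cast; ring
  calc _ ≤ ∫ z in Set.Ioc (0:ℝ) 1, z ^ (j:ℝ) * Real.exp (-a * z ^ 2) := by
        apply integral_mono_of_nonneg
        · rw [EventuallyLE, ae_restrict_iff' measurableSet_Ioc]
          refine ae_of_all _ fun z hz => ?_
          exact mul_nonneg (pow_nonneg hz.1.le _) (Real.rpow_nonneg (by nlinarith [hz.1, hz.2]) _)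
        · exact hint.mono_set Set.Ioc_subset_Ioi_self
        · rw [EventuallyLE, ae_restrict_iff' measurableSet_Ioc]
          refine ae_of_all _ fun z hz => ?_
          have hz0 := hz.1.le
          have h1 : 0 ≤ 1 - z ^ 2 := by nlinarith [hz.1, hz.2]
          rw [Real.rpow_natCast]
          show z ^ j * (1 - z ^ 2) ^ a ≤ _
          gcongr
          calc _ ≤ (Real.exp (-z^2)) ^ a := by
                apply Real.rpow_le_rpow h1 _ ha.le
                linarith [Real.add_one_le_exp (-z^2)]
            _ = _ := by rw [← Real.exp_mul]; congr 1; ring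
    _ ≤ ∫ z in Set.Ioi (0:ℝ), z ^ (j:ℝ) * Real.exp (-a * z ^ 2) := by
        apply setIntegral_mono_set hint
        · rw [EventuallyLE, ae_restrict_iff' measurableSet_Ioi]
          refine ae_of_all _ fun z hz => ?_
          have hz0 : 0 < z := hz
          simp only [Pi.zero_apply]; positivity
        · exact Set.Ioc_subset_Ioi_self.eventuallyLE
    _ = a ^ (-((j:ℝ)+1)/2) * (1/2) * Real.Gamma (((j:ℝ)+1)/2) := by
        rw [← hval]; simp
    _ ≤ _ := by
        rw [e, div_eq_inv_mul (Real.Gamma _)]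
        have : 0 < (√a ^ (j+1))⁻¹ := by positivity
        have h2 := mul_pos this hg
        linarith
  
lemma inv_tanh (a : ℝ) (ha : 0 < a) : Real.cosh a / Real.sinh a ≤ 1 + 1 / a := by
  have hs : 0 < Real.sinh a := Real.sinh_pos_iff.2 ha
  rw [div_le_iff₀ hs, Real.cosh_eq, Real.sinh_eq]
  have h1 : 1 + 2 * a ≤ Real.exp a * Real.exp a := by
    rw [← Real.exp_add]; linarith [Real.add_one_le_exp (a + a)]
  have h2 : Real.exp a * Real.exp (-a) = 1 := by rw [← Real.exp_add]; simp
  have h3 : 0 < Real.exp (-a) := Real.exp_pos _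
  have h4 : (1 + 2 * a) * Real.exp (-a) ≤ Real.exp a := by
    calc _ ≤ Real.exp a * Real.exp a * Real.exp (-a) := by gcongr
      _ = Real.exp a := by rw [mul_assoc, h2, mul_one]
  have : (1 + 1 / a) * ((Real.exp a - Real.exp (-a)) / 2) - (Real.exp a + Real.exp (-a)) / 2 =
     (Real.exp a - (1 + 2 * a) * Real.exp (-a)) / (2 * a) := by field_simp; ring
  have h5 : 0 ≤ (Real.exp a - (1 + 2 * a) * Real.exp (-a)) / (2 * a) :=
    div_nonneg (by linarith) (by linarith)
  linarith

lemma P_bound (d q γ : ℕ) (hq : 1 ≤ q) (hγ : γ ≤ q - 1) (hd : q + 3 ≤ d) (K u : ℝ) (hK : K < 0)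
    (hu : 0 < u) :
    0 ≤ Pprob d q γ K u ∧ Pprob d q γ K u ≤
      omegaS (γ + 1) * (omegaS (d - q) / omegaS (d - q + (γ + 1))) *
      (1 / √(-K) / RK K u * ∫ z in (0:ℝ)..1, z ^ (γ + 1) * (1 - z ^ 2) ^ (((d : ℝ) - (q : ℝ)) / 2 - 1)) := by
  obtain ⟨n, hn⟩ : ∃ n, q = n + γ + 1 := ⟨q - 1 - γ, by omega⟩
  have hk : 0 < √(-K) := Real.sqrt_pos.2 (by linarith)
  have hs : 0 < Real.sinh (√(-K) * u) := Real.sinh_pos_iff.2 (by positivity)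
  have hc := Real.cosh_pos (√(-K) * u)
  have hR : 0 < RK K u := by rw [RK_eq]; positivity
  set R := RK K u with hRdef
  have hpos : 0 < 1 + K * R ^ 2 := by rw [one_add_RK K u hK]; positivity
  set e : ℝ := -((d : ℝ) + 1) / 2 with he
  have he0 : e ≤ 0 := by rw [he]; have : (0:ℝ) ≤ d := Nat.cast_nonneg d; linarith
  set a : ℝ := ((d : ℝ) - (q : ℝ)) / 2 - 1 with hadef
  have ha : 0 ≤ a := by
    have : ((q + 3 : ℕ) : ℝ) ≤ d := by exact_mod_cast hd
    push_cast at this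
    rw [hadef]; linarith
  have hbase : ∀ x ∈ Set.Icc 0 R, 1 + K * R ^ 2 ≤ 1 + K * x ^ 2 := by
    intro x hx
    have : x ^ 2 ≤ R ^ 2 := by have := hx.1; have := hx.2; gcongr
    nlinarith
  have hVmono : ∀ x y : ℝ, 0 ≤ x → x ≤ y → y ≤ R → (1 + K * x ^ 2) ^ e ≤ (1 + K * y ^ 2) ^ e := by
    intro x y hx hxy hy
    have h1 := hbase y ⟨hx.trans hxy, hy⟩
    apply Real.rpow_le_rpow_of_nonpos (by linarith) _ he0
    have : x ^ 2 ≤ y ^ 2 := by gcongr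
    nlinarith
  have hVnn : ∀ x ∈ Set.Icc 0 R, 0 ≤ (1 + K * x ^ 2) ^ e := fun x hx =>
    Real.rpow_nonneg (hpos.le.trans (hbase x hx)) _
  have hswap := aux_swap_s5 n q (by omega) (1 / √(-K)) R ((1 + K * R ^ 2) ^ e) (by positivity) hR
    (fun z => (1 - z ^ 2) ^ a) (Set.indicator (Set.Icc 0 R) fun x => (1 + K * x ^ 2) ^ e)
    (fun x => (1 + K * x ^ 2) ^ e)
    (by
      apply ContinuousOn.rpow_const (by fun_prop)
      intro x _; right; exact ha)
    (by
      intro z hz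
      exact Real.rpow_nonneg (by nlinarith [hz.1, hz.2]) _)
    (by
      apply Measurable.indicator _ measurableSet_Icc
      fun_prop)
    (fun x => Set.indicator_nonneg hVnn x)
    (by
      intro x
      by_cases hx : x ∈ Set.Icc 0 R
      · rw [Set.indicator_of_mem hx]
        exact hVmono x R hx.1 hx.2 le_rfl
      · rw [Set.indicator_of_notMem hx]
        exact Real.rpow_nonneg hpos.le _)
    (by
      intro x hx y hy hxy
      rw [Set.indicator_of_mem hx, Set.indicator_of_mem hy]
      exact hVmono x y hx.1 hxy hy.2)
    (by
      intro x hx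
      rw [Set.indicator_of_notMem]
      intro h; exact absurd h.2 (not_le.2 hx))
    (by
      intro x hx
      rw [Set.indicator_of_mem hx])
  have hqn : q - n = γ + 1 := by omega
  rw [hqn] at hswap
  set G := ∫ x in (0:ℝ)..R, x ^ n * (1 + K * x ^ 2) ^ e with hG
  have hG0 : 0 ≤ G := by
    apply intervalIntegral.integral_nonneg hR.le
    intro x hx
    exact mul_nonneg (pow_nonneg hx.1 _) (hVnn x hx)
  have hC : Cconst K d (d - q + γ) u = omegaS (q - γ) * G := by
    have := aux_C d n K u hK hu (by omega)
    rw [hG, this]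
    unfold Cconst
    have h1 : d - (d - q + γ) = q - γ := by omega
    have h2 : d - (d - q + γ) - 1 = n := by omega
    have h3 : d - q + γ = d - 1 - n := by omega
    have h4 : -(d:ℝ) + ((d - q + γ : ℕ) : ℝ) + 1 = -(n:ℝ) := by
      have : (d - q + γ) + n + 1 = d := by omega
      have h5 : (((d - q + γ) + n + 1 : ℕ) : ℝ) = d := by exact_mod_cast this
      push_cast at h5 ⊢
      linarith
    rw [h4, h2, h1, h3]; ring
  set N := ∫ r in (0:ℝ)..(1 / √(-K)),
      r ^ ((q : ℝ) - (γ : ℝ) - 1) *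
        ∫ z in (0:ℝ)..(min 1 (R / r)),
          z ^ q * (1 - z ^ 2) ^ a * (1 + K * r ^ 2 * z ^ 2) ^ e with hN
  have hNeq : N = ∫ r in (0:ℝ)..(1 / √(-K)), r ^ n * ∫ z in (0:ℝ)..(min 1 (R / r)),
      z ^ q * (1 - z ^ 2) ^ a * (1 + K * (r * z) ^ 2) ^ e := by
    rw [hN]
    have : (q:ℝ) - γ - 1 = (n:ℝ) := by rw [hn]; push_cast; ring
    rw [this]
    simp only [Real.rpow_natCast, mul_pow, mul_assoc]
  have hN0 : 0 ≤ N := by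
    rw [hNeq]
    apply intervalIntegral.integral_nonneg (by positivity)
    intro r hr
    have hr0 := hr.1
    apply mul_nonneg (by positivity)
    apply intervalIntegral.integral_nonneg (le_min zero_le_one (by positivity))
    intro z hz
    have hz0 := hz.1
    have hz1 : z ≤ 1 := hz.2.trans (min_le_left _ _)
    refine mul_nonneg (mul_nonneg (by positivity) (Real.rpow_nonneg (by nlinarith) _)) ?_
    apply hVnn
    refine ⟨by positivity, ?_⟩
    rcases hr0.eq_or_lt with h | h
    · rw [← h, zero_mul]; exact hR.le
    · have := hz.2.trans (min_le_right _ _)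
      rw [le_div_iff₀ h] at this; linarith
  rw [← hNeq] at hswap
  have o1 := omegaS_pos (γ + 1) (by omega)
  have o2 := omegaS_pos (q - γ) (by omega)
  have o3 := omegaS_pos (d - q) (by omega)
  have o4 := omegaS_pos (d - q + (γ + 1)) (by omega)
  have o5 := omegaS_pos (d - γ) (by omega)
  have hP : Pprob d q γ K u =
      omegaS (γ + 1) * (omegaS (d - q) / omegaS (d - q + (γ + 1))) * (N / G) := by
    unfold Pprob Dconst
    rw [hC, ← hRdef, ← he, ← hadef, ← hN, add_assoc (d - q)]
    rcases hG0.eq_or_lt with h | h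
    · rw [← h]; simp
    · field_simp
  rw [hP]
  set B := ∫ z in (0:ℝ)..1, z ^ (γ + 1) * (1 - z ^ 2) ^ a with hB
  have hB0 : 0 ≤ B := by
    apply intervalIntegral.integral_nonneg zero_le_one
    intro z hz
    exact mul_nonneg (pow_nonneg hz.1 _) (Real.rpow_nonneg (by nlinarith [hz.1, hz.2]) _)
  refine ⟨by positivity, ?_⟩
  gcongr
  exact div_le_of_le_mul₀ hG0 (by positivity) hswap

/-- supercritical phase, `-K(d)·d → ∞` implies the intersection probability tends to 0. -/
theorem phase_transition_supercritical (q γ : ℕ) (hq : 1 ≤ q) (hγ : γ ≤ q - 1) (u : ℝ)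
    (hu : 0 < u) (K : ℕ → ℝ) (hK : ∀ d : ℕ, 2 ≤ d → K d < 0)
    (h : Tendsto (fun d : ℕ => -K d * (d : ℝ)) atTop atTop) :
    Tendsto (fun d : ℕ => Pprob d q γ (K d) u) atTop (nhds 0) := by
  set c1 := Real.Gamma (((γ + 1 : ℕ) + 1 : ℝ) / 2) with hc1
  have hc1p : 0 < c1 := Real.Gamma_pos_of_pos (by positivity)
  have o1 := omegaS_pos (γ + 1) (by omega)
  set C0 := omegaS (γ + 1) * 2 ^ (γ + 1) * c1 * 2 with hC0
  have hlim : Tendsto (fun d : ℕ => C0 * (1 / √(d:ℝ) + 1 / (√(-K d * (d:ℝ)) * u))) atTop (nhds 0) := by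
    have t1 : Tendsto (fun d : ℕ => √(d:ℝ)) atTop atTop :=
      Real.tendsto_sqrt_atTop.comp tendsto_natCast_atTop_atTop
    have t2 : Tendsto (fun d : ℕ => √(-K d * (d:ℝ)) * u) atTop atTop :=
      (Real.tendsto_sqrt_atTop.comp h).atTop_mul_const hu
    have := ((t1.inv_tendsto_atTop).add (t2.inv_tendsto_atTop)).const_mul C0
    simpa [one_div] using this
  have hev : ∀ᶠ d : ℕ in atTop, q + 3 ≤ d ∧ 2 * q + 4 ≤ d ∧ 2 ≤ d := by
    filter_upwards [eventually_ge_atTop (2 * q + 4)] with d hd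
    omega
  refine tendsto_of_tendsto_of_tendsto_of_le_of_le' tendsto_const_nhds hlim ?_ ?_
  · filter_upwards [hev] with d hd
    exact (P_bound d q γ hq hγ hd.1 (K d) u (hK d hd.2.2) hu).1
  · filter_upwards [hev] with d hd
    have hKd := hK d hd.2.2
    refine (P_bound d q γ hq hγ hd.1 (K d) u hKd hu).2.trans ?_
    have hk : 0 < √(-K d) := Real.sqrt_pos.2 (by linarith)
    have hdd : (2 * q + 4 : ℝ) ≤ d := by exact_mod_cast hd.2.1
    have hd0 : (0:ℝ) < d := by have : (0:ℝ) ≤ q := Nat.cast_nonneg q; linarith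
    have hsd : 0 < √(d:ℝ) := Real.sqrt_pos.2 hd0
    have hs : 0 < Real.sinh (√(-K d) * u) := Real.sinh_pos_iff.2 (by positivity)
    have hc := Real.cosh_pos (√(-K d) * u)
    have hγq : (γ:ℝ) + 1 ≤ q := by
      have : γ + 1 ≤ q := by omega
      exact_mod_cast this
    have hsub : ((d - q : ℕ) : ℝ) = d - q := by
      rw [Nat.cast_sub (by omega)]
    have r1 := omega_ratio (d - q) (γ + 1) (by omega) d (by
      rw [hsub]; push_cast; linarith)
    have hT : 1 / √(-K d) / RK (K d) u ≤ 1 + 1 / (√(-K d) * u) := by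
      refine le_trans (le_of_eq ?_) (inv_tanh (√(-K d) * u) (by positivity))
      rw [RK_eq]; field_simp
    have hT0 : 0 ≤ 1 / √(-K d) / RK (K d) u := by rw [RK_eq]; positivity
    have ha4 : (d:ℝ) / 4 ≤ ((d : ℝ) - (q : ℝ)) / 2 - 1 := by linarith
    have hb := beta_bound (γ + 1) (((d : ℝ) - (q : ℝ)) / 2 - 1) (by linarith)
    rw [← hc1] at hb
    have hsq : √(d:ℝ) / 2 ≤ √(((d : ℝ) - (q : ℝ)) / 2 - 1) := by
      apply Real.le_sqrt_of_sq_le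
      rw [div_pow, Real.sq_sqrt hd0.le]; linarith
    have hb2 := hb.trans (show _ ≤ c1 / (√(d:ℝ) / 2) ^ (γ + 1 + 1) by gcongr)
    have o3 := omegaS_pos (d - q) (by omega)
    have o4 := omegaS_pos (d - q + (γ + 1)) (by omega)
    have hB0 : 0 ≤ ∫ z in (0:ℝ)..1, z ^ (γ + 1) * (1 - z ^ 2) ^ (((d : ℝ) - (q : ℝ)) / 2 - 1) := by
      apply intervalIntegral.integral_nonneg zero_le_one
      intro z hz
      exact mul_nonneg (pow_nonneg hz.1 _) (Real.rpow_nonneg (by nlinarith [hz.1, hz.2]) _)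
    have hTB := mul_nonneg hT0 hB0
    calc _ ≤ omegaS (γ + 1) * (√(d:ℝ) ^ (γ + 1)) * ((1 + 1 / (√(-K d) * u)) *
          (c1 / (√(d:ℝ) / 2) ^ (γ + 1 + 1))) := by
          gcongr
      _ = _ := by
          rw [hC0, Real.sqrt_mul (by linarith), pow_succ (√(d:ℝ) / 2), div_pow]
          field_simp
end
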